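/- arXiv:1204.4513 — 2 statements merged into one kernel-verified Lean document; each statement's English description precedes it below -/
import Mathlib

section
/- Let (R, 𝔪, k) be a commutative noetherian local ring and M a nonzero finitely generated R-module of finite projective dimension. Then AB-dim_R M is finite and AB-dim_R M = pd_R M = depth R − depth_R M. -/
/-!
Write `n = pd M`.

*AB-dimension.* Finitely generated projectives are totally reflexive, so a projective resolution of
length `n` gives `G-dim M ≤ n`. All `Ext^i(M, -)` vanish for `i > n`, so every finitely generated
module lies in `M^⊥` and `P_R(M) ≤ n`; conversely `Ext^n(M, L) ≠ 0` for some finitely generated `L`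
(`ModuleCat.hasProjectiveDimensionLT_of_forall_finite`), so `P_R(M) = n` (`extPsup_eq`). Since the
statement uses `Ext` as a left derived functor while Mathlib's long exact sequences concern
`Abelian.Ext`, the two vanishing conditions are compared through a projective resolution
(`extVanishes_iff`).

*Auslander–Buchsbaum formula.* By Rees' theorem, the depth of a nonzero finitely generated module
is the least `t` with `Ext^t(k, M) ≠ 0` (`rdepth_eq_of_extDepthEq`); such a `t` exists because an
`M`-regular sequence is no longer than the Krull dimension of `R`. `auslanderBuchsbaum` inducts on
`n`, using the long exact sequence of `Ext(k, -)` for `0 ⟶ K ⟶ F ⟶ M ⟶ 0`, a minimal free cover.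
If `e` is the depth of `K`, the map `Ext^e(k, K) ⟶ Ext^e(k, F)` is zero: for `n = 1` the module `K`
is free and `K ⟶ F` has entries in `𝔪`, which annihilates `Ext(k, -)`, and for `n ≥ 2` we have
`e < depth R`, so the target vanishes. Hence `M` has depth `e - 1`.
-/


open CategoryTheory IsLocalRing

noncomputable section

universe u

variable (R : Type u) [CommRing R]

/-- The Ext group `Ext^n_R(M, N)` vanishes. -/
def ExtVanishes (M : Type u) [AddCommGroup M] [Module R M]
    (N : Type u) [AddCommGroup N] [Module R N] (n : ℕ) : Prop :=
  Subsingleton (((Ext R (ModuleCat.{u} R) n).obj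
    (Opposite.op (ModuleCat.of R M))).obj (ModuleCat.of R N))

/-- `N ∈ M^⊥`, i.e. `Ext^n_R(M,N) = 0` for all sufficiently large `n`. -/
def MemPerp (M : Type u) [AddCommGroup M] [Module R M]
    (N : Type u) [AddCommGroup N] [Module R N] : Prop :=
  ∃ d : ℕ, ∀ n ≥ d, ExtVanishes R M N n

/-- `P_R(M,N) = sup { n | Ext^n_R(M,N) ≠ 0 }`, an element of `{-∞} ∪ ℕ ∪ {∞}`;
it is `⊥ = -∞` when every `Ext^n_R(M,N)` vanishes. -/
def extP (M : Type u) [AddCommGroup M] [Module R M]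
    (N : Type u) [AddCommGroup N] [Module R N] : WithBot ℕ∞ :=
  sSup {x : WithBot ℕ∞ | ∃ n : ℕ, ¬ ExtVanishes R M N n ∧ x = (n : ℕ∞)}

/-- `P_R(M) = sup { P_R(M,N) | N ∈ M^⊥ }`, the sup being taken over all
finitely generated modules in `M^⊥`. -/
def extPsup (M : Type u) [AddCommGroup M] [Module R M] : WithBot ℕ∞ :=
  sSup {x : WithBot ℕ∞ | ∃ (N : Type u) (_ : AddCommGroup N) (_ : Module R N),
    Module.Finite R N ∧ MemPerp R M N ∧ x = extP R M N}

/-- A module `G` is totally reflexive if the biduality map `G → G**` is bijective and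
`Ext^n_R(G,R) = 0 = Ext^n_R(G*,R)` for all `n > 0`. -/
def IsTotallyReflexive (G : Type u) [AddCommGroup G] [Module R G] : Prop :=
  Function.Bijective (Module.Dual.eval R G) ∧
    (∀ n > 0, ExtVanishes R G R n) ∧ (∀ n > 0, ExtVanishes R (Module.Dual R G) R n)

/-- `G-dim_R M ≤ n`: there is a resolution of `M` of length `n` by finitely generated
totally reflexive modules. -/
def GdimLE : ℕ → ModuleCat.{u} R → Prop
  | 0, M => IsTotallyReflexive R M
  | n + 1, M => ∃ G : ModuleCat.{u} R, Module.Finite R G ∧ IsTotallyReflexive R G ∧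
      ∃ f : G →ₗ[R] M, Function.Surjective f ∧ GdimLE n (ModuleCat.of R (LinearMap.ker f))

/-- The G-dimension of `M`, as an element of `ℕ∞`. -/
def gdim (M : Type u) [AddCommGroup M] [Module R M] : ℕ∞ :=
  sInf {x : ℕ∞ | ∃ n : ℕ, GdimLE R n (ModuleCat.of R M) ∧ x = n}

/-- `pd_R M ≤ n`: there is a projective resolution of `M` of length `n` by finitely
generated projective modules. -/
def ProjDimLE : ℕ → ModuleCat.{u} R → Prop
  | 0, M => Module.Projective R M
  | n + 1, M => ∃ P : ModuleCat.{u} R, Module.Finite R P ∧ Module.Projective R P ∧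
      ∃ f : P →ₗ[R] M, Function.Surjective f ∧ ProjDimLE n (ModuleCat.of R (LinearMap.ker f))

/-- The projective dimension of `M`, as an element of `ℕ∞`. -/
def projdim (M : Type u) [AddCommGroup M] [Module R M] : ℕ∞ :=
  sInf {x : ℕ∞ | ∃ n : ℕ, ProjDimLE R n (ModuleCat.of R M) ∧ x = n}

/-- `injdim_R M ≤ n`: there is an injective resolution of `M` of length `n`. -/
def InjDimLE : ℕ → ModuleCat.{u} R → Prop
  | 0, M => Module.Injective R M
  | n + 1, M => ∃ I : ModuleCat.{u} R, Module.Injective R I ∧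
      ∃ f : M →ₗ[R] I, Function.Injective f ∧
        InjDimLE n (ModuleCat.of R (I ⧸ LinearMap.range f))

/-- `R` is Gorenstein: `R` has finite injective dimension as a module over itself. -/
def IsGorensteinRing : Prop := ∃ n : ℕ, InjDimLE R n (ModuleCat.of R R)

/-- `AB-dim_R M = sup { G-dim_R M, P_R(M) }`. -/
def abdim (M : Type u) [AddCommGroup M] [Module R M] : WithBot ℕ∞ :=
  max ((gdim R M : ℕ∞) : WithBot ℕ∞) (extPsup R M)

/-- The depth of `M`: the length of a maximal `M`-regular sequence contained in the
maximal ideal (expressed as the sup of lengths of such regular sequences). -/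
def rdepth [IsLocalRing R] (M : Type u) [AddCommGroup M] [Module R M] : ℕ∞ :=
  sSup {x : ℕ∞ | ∃ rs : List R, (∀ r ∈ rs, r ∈ maximalIdeal R) ∧
    RingTheory.Sequence.IsRegular M rs ∧ x = rs.length}

/-- `S` is a first syzygy `Ω M` of `M`: the kernel of a minimal free cover of `M`. -/
def IsSyzygyOf [IsLocalRing R] (S M : ModuleCat.{u} R) : Prop :=
  ∃ F : ModuleCat.{u} R, Module.Free R F ∧ Module.Finite R F ∧
    ∃ π : F →ₗ[R] M, Function.Surjective π ∧
      LinearMap.ker π ≤ (maximalIdeal R) • (⊤ : Submodule R F) ∧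
      Nonempty (S ≃ₗ[R] LinearMap.ker π)

/-- `S` is an `n`-th syzygy `Ω^n M` of `M`. -/
def IsNthSyzygyOf [IsLocalRing R] : ℕ → ModuleCat.{u} R → ModuleCat.{u} R → Prop
  | 0, S, M => Nonempty (S ≃ₗ[R] M)
  | n + 1, S, M => ∃ T : ModuleCat.{u} R, IsSyzygyOf R T M ∧ IsNthSyzygyOf n S T

end

/-! ### Comparison of the two definitions of `Ext` -/

section Bridge

variable {R : Type u} [CommRing R]

/-- Vanishing of `Ext^n` read off a projective resolution. For `n = 0` the predecessor index
`(ComplexShape.up ℕ).prev 0` is `0` itself and the differential `d 0 0` is zero, so the condition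
says that `f = 0`. -/
lemma extVanishes_iff_exact {M : Type u} [AddCommGroup M] [Module R M]
    (P : ProjectiveResolution (ModuleCat.of R M))
    (N : Type u) [AddCommGroup N] [Module R N] (n : ℕ) :
    ExtVanishes R M N n ↔
      ∀ f : P.complex.X n ⟶ ModuleCat.of R N, P.complex.d (n + 1) n ≫ f = 0 →
        ∃ g : P.complex.X ((ComplexShape.up ℕ).prev n) ⟶ ModuleCat.of R N,
          P.complex.d n ((ComplexShape.up ℕ).prev n) ≫ g = f := by
  have h1 : ExtVanishes R M N n ↔
      (P.complex.linearYonedaObj R (ModuleCat.of R N)).ExactAt n := by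
    rw [HomologicalComplex.exactAt_iff_isZero_homology,
      ← (P.isoExt n (ModuleCat.of R N)).isZero_iff, ModuleCat.isZero_iff_subsingleton]
    rfl
  rw [h1, HomologicalComplex.exactAt_iff' _ _ n (n + 1) rfl (by simp),
    ShortComplex.moduleCat_exact_iff]
  rfl

lemma extVanishes_iff (M : Type u) [AddCommGroup M] [Module R M]
    (N : Type u) [AddCommGroup N] [Module R N] (n : ℕ) :
    ExtVanishes R M N n ↔
      Subsingleton (Abelian.Ext (ModuleCat.of R M) (ModuleCat.of R N) n) := by
  let P := projectiveResolution (ModuleCat.of R M)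
  rw [extVanishes_iff_exact P]
  cases n with
  | zero =>
    rw [Abelian.Ext.homEquiv₀.subsingleton_congr]
    constructor
    · intro h
      refine subsingleton_of_forall_eq 0 fun φ => ?_
      let φ' : ((ChainComplex.single₀ (ModuleCat.{u} R)).obj (ModuleCat.of R M)).X 0 ⟶
          ModuleCat.of R N := φ
      obtain ⟨g, hg⟩ := h (P.π.f 0 ≫ φ') (by
        rw [← Category.assoc, P.complex_d_comp_π_f_zero, Limits.zero_comp])
      have hd : P.complex.d 0 ((ComplexShape.up ℕ).prev 0) = 0 :=
        P.complex.shape _ _ (by simp)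
      rw [hd, Limits.zero_comp] at hg
      have h0 : φ' = 0 := by rw [← cancel_epi (P.π.f 0), ← hg, Limits.comp_zero]
      exact h0
    · intro h f hf
      -- `f` kills the image of `P₁`, so it descends along the cokernel map `P₀ ⟶ M`
      let ψ : ModuleCat.of R M ⟶ ModuleCat.of R N :=
        P.isColimitCokernelCofork.desc (Limits.CokernelCofork.ofπ f hf)
      have h0 : P.isColimitCokernelCofork.desc (Limits.CokernelCofork.ofπ f hf) = 0 :=
        Subsingleton.elim ψ 0
      have hfac := P.isColimitCokernelCofork.fac (Limits.CokernelCofork.ofπ f hf)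
        Limits.WalkingParallelPair.one
      rw [h0, Limits.comp_zero] at hfac
      exact ⟨0, by rw [Limits.comp_zero]; exact hfac⟩
  | succ n =>
    have hp : (ComplexShape.up ℕ).prev (n + 1) = n := by simp
    rw [hp]
    constructor
    · intro h
      refine subsingleton_of_forall_eq 0 fun α => ?_
      obtain ⟨f, hf, rfl⟩ := P.extMk_surjective α (n + 2) rfl
      rw [P.extMk_eq_zero_iff f (n + 2) rfl hf n rfl]
      exact h f hf
    · intro h f hf
      rw [← P.extMk_eq_zero_iff f (n + 2) rfl hf n rfl]
      exact Subsingleton.elim _ _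

end Bridge

/-! ### Projective dimension, G-dimension and `P_R` -/

section Dimension

variable {R : Type u} [CommRing R]

lemma hasProjectiveDimensionLT_of_projDimLE {n : ℕ} {M : ModuleCat.{u} R}
    (h : ProjDimLE R n M) : HasProjectiveDimensionLT M (n + 1) := by
  induction n generalizing M with
  | zero =>
    have : Module.Projective R M := h
    rw [zero_add, ← projective_iff_hasProjectiveDimensionLT_one, ← IsProjective.iff_projective]
    exact this
  | succ n ih =>
    obtain ⟨P, _, hP, f, hf, hk⟩ := h
    have : Projective P := (IsProjective.iff_projective _).mp hP
    exact (LinearMap.shortExact_shortComplexKer hf).hasProjectiveDimensionLT_X₃ (n + 1)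
      (ih hk) (hasProjectiveDimensionLT_of_ge P 1 (n + 2) (by omega))

lemma extVanishes_of_projective (M : Type u) [AddCommGroup M] [Module R M] [Module.Projective R M]
    (N : Type u) [AddCommGroup N] [Module R N] (n : ℕ) (hn : 0 < n) : ExtVanishes R M N n := by
  obtain ⟨n, rfl⟩ := Nat.exists_eq_succ_of_ne_zero hn.ne'
  have : Projective (ModuleCat.of R M) := (IsProjective.iff_projective _).mp inferInstance
  rw [extVanishes_iff]
  exact Abelian.Ext.subsingleton_of_projective _ _ _

lemma isTotallyReflexive_of_projective (G : Type u) [AddCommGroup G] [Module R G]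
    [Module.Finite R G] [Module.Projective R G] : IsTotallyReflexive R G :=
  ⟨Module.bijective_dual_eval R G, extVanishes_of_projective G R,
    extVanishes_of_projective (Module.Dual R G) R⟩

variable [IsNoetherianRing R]

lemma projDimLE_of_hasProjectiveDimensionLT {n : ℕ} {M : ModuleCat.{u} R} [Module.Finite R M]
    (h : HasProjectiveDimensionLT M (n + 1)) : ProjDimLE R n M := by
  induction n generalizing M with
  | zero =>
    rw [zero_add, ← projective_iff_hasProjectiveDimensionLT_one, ← IsProjective.iff_projective] at h
    exact h
  | succ n ih =>
    obtain ⟨P, _, _, _, _, f, hf⟩ := Module.exists_finite_presentation R M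
    have : Projective (ModuleCat.of R P) :=
      (IsProjective.iff_projective _).mp inferInstance
    refine ⟨ModuleCat.of R P, ‹_›, inferInstanceAs (Module.Projective R P), f, hf, ih ?_⟩
    exact (LinearMap.shortExact_shortComplexKer hf).hasProjectiveDimensionLT_X₁ (n + 1)
      (hasProjectiveDimensionLT_of_ge (ModuleCat.of R P) 1 (n + 1) (by omega)) h

lemma gdimLE_of_projDimLE {n : ℕ} {M : ModuleCat.{u} R} [Module.Finite R M]
    (h : ProjDimLE R n M) : GdimLE R n M := by
  induction n generalizing M with
  | zero =>
    have : Module.Projective R M := h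
    exact isTotallyReflexive_of_projective M
  | succ n ih =>
    obtain ⟨P, _, _, f, hf, hk⟩ := h
    exact ⟨P, ‹_›, isTotallyReflexive_of_projective P, f, hf, ih hk⟩

/-- If `projdim R M` is finite, it is a natural number `n` attained by a resolution, and it is the
projective dimension of `M` in Mathlib's sense. For `n = 0` the last clause says `M ≠ 0`. -/
lemma exists_projdim_eq {M : Type u} [AddCommGroup M] [Module R M] [Module.Finite R M]
    [Nontrivial M] (h : projdim R M < ⊤) :
    ∃ n : ℕ, projdim R M = n ∧ ProjDimLE R n (ModuleCat.of R M) ∧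
      HasProjectiveDimensionLT (ModuleCat.of R M) (n + 1) ∧
      ¬ HasProjectiveDimensionLT (ModuleCat.of R M) n := by
  have hne : {x : ℕ∞ | ∃ n : ℕ, ProjDimLE R n (ModuleCat.of R M) ∧ x = n}.Nonempty := by
    by_contra hc
    rw [Set.not_nonempty_iff_eq_empty] at hc
    rw [projdim, hc, sInf_empty] at h
    exact lt_irrefl _ h
  obtain ⟨n, hn, hx⟩ := csInf_mem hne
  refine ⟨n, hx, hn, hasProjectiveDimensionLT_of_projDimLE hn, fun hlt => ?_⟩
  cases n with
  | zero =>
    rw [hasProjectiveDimensionLT_zero_iff_isZero, ModuleCat.isZero_iff_subsingleton] at hlt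
    exact not_subsingleton M hlt
  | succ n =>
    have : projdim R M ≤ (n : ℕ∞) :=
      sInf_le ⟨n, projDimLE_of_hasProjectiveDimensionLT hlt, rfl⟩
    rw [projdim, hx] at this
    exact absurd (Nat.cast_le.mp this) (by omega)

/-- Over a noetherian ring, `P_R(M) = pd_R M` when the latter is finite. -/
lemma extPsup_eq {M : Type u} [AddCommGroup M] [Module R M] [Module.Finite R M] {n : ℕ}
    (h₁ : HasProjectiveDimensionLT (ModuleCat.of R M) (n + 1))
    (h₂ : ¬ HasProjectiveDimensionLT (ModuleCat.of R M) n) :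
    extPsup R M = ((n : ℕ∞) : WithBot ℕ∞) := by
  have hvan (N : Type u) [AddCommGroup N] [Module R N] (m : ℕ) (hm : n + 1 ≤ m) :
      ExtVanishes R M N m := by
    rw [extVanishes_iff]
    exact HasProjectiveDimensionLT.subsingleton _ (n + 1) m hm _
  apply le_antisymm
  · refine sSup_le ?_
    rintro _ ⟨N, _, _, -, -, rfl⟩
    refine sSup_le ?_
    rintro _ ⟨m, hm, rfl⟩
    have : m ≤ n := by
      by_contra hc
      exact hm (hvan N m (by omega))
    exact_mod_cast this
  · have : ∃ L : ModuleCat.{u} R, Module.Finite R L ∧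
        ¬ Subsingleton (Abelian.Ext (ModuleCat.of R M) L n) := by
      by_contra! hc
      exact h₂ (ModuleCat.hasProjectiveDimensionLT_of_forall_finite _ n hc)
    obtain ⟨L, hL, hne⟩ := this
    refine le_sSup_of_le ⟨L, inferInstance, inferInstance, hL, ⟨n + 1, hvan L⟩, rfl⟩ ?_
    exact le_sSup ⟨n, fun hv => hne ((extVanishes_iff M L n).mp hv), rfl⟩

lemma gdim_le_of_projDimLE {M : Type u} [AddCommGroup M] [Module R M] [Module.Finite R M] {n : ℕ}
    (h : ProjDimLE R n (ModuleCat.of R M)) : gdim R M ≤ n :=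
  sInf_le ⟨n, gdimLE_of_projDimLE h, rfl⟩

end Dimension

/-! ### Depth and `Ext(k, -)` -/

section Depth

variable {R : Type u} [CommRing R] [IsLocalRing R]

variable (R) in
/-- The residue field `R ⧸ 𝔪` as an object of `ModuleCat R`. -/
abbrev resMod : ModuleCat.{u} R := ModuleCat.of R (R ⧸ maximalIdeal R)

/-- `t` is the least degree in which `Ext_R(k, M)` does not vanish. -/
def ExtDepthEq (M : ModuleCat.{u} R) (t : ℕ) : Prop :=
  (∀ i < t, Subsingleton (Abelian.Ext (resMod R) M i)) ∧
    ¬ Subsingleton (Abelian.Ext (resMod R) M t)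

lemma support_resMod :
    Module.support R (resMod R) = PrimeSpectrum.zeroLocus (maximalIdeal R : Set R) := by
  rw [Module.support_eq_zeroLocus, Ideal.annihilator_quotient]

lemma maximalIdeal_smul_top_lt (M : Type u) [AddCommGroup M] [Module R M] [Module.Finite R M]
    [Nontrivial M] : maximalIdeal R • (⊤ : Submodule R M) < ⊤ :=
  lt_top_iff_ne_top.mpr (Ne.symm (Submodule.top_ne_ideal_smul_of_le_jacobson_annihilator
    (IsLocalRing.maximalIdeal_le_jacobson _)))

variable [IsNoetherianRing R]

/-- Rees' theorem for the maximal ideal, with `k` as the test module. -/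
lemma rdepth_eq_of_extDepthEq {M : Type u} [AddCommGroup M] [Module R M] [Module.Finite R M]
    [Nontrivial M] {t : ℕ} (h : ExtDepthEq (ModuleCat.of R M) t) : rdepth R M = t := by
  apply le_antisymm
  · refine sSup_le ?_
    rintro _ ⟨rs, hmem, hreg, rfl⟩
    rw [Nat.cast_le]
    by_contra hlt
    exact h.2 (ModuleCat.subsingleton_ext_of_exists_isRegular (maximalIdeal R) (resMod R)
      support_resMod.subset (ModuleCat.of R M) (maximalIdeal_smul_top_lt M) rs hmem hreg t
      (by omega))
  · obtain ⟨rs, hlen, hmem, hreg⟩ := ModuleCat.exists_isRegular_of_exists_subsingleton_ext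
      (maximalIdeal R) t (ModuleCat.of R M) (maximalIdeal_smul_top_lt M) (resMod R)
      support_resMod h.1
    exact le_sSup ⟨rs, hmem, hreg, by rw [hlen]⟩

/-- The depth of a nonzero finite module is bounded by the (finite) Krull dimension of the ring,
so some `Ext_R^t(k, M)` is nonzero. -/
lemma exists_extDepthEq (M : Type u) [AddCommGroup M] [Module R M] [Module.Finite R M]
    [Nontrivial M] : ∃ t : ℕ, ExtDepthEq (ModuleCat.of R M) t := by
  classical
  have hex : ∃ t : ℕ, ¬ Subsingleton (Abelian.Ext (resMod R) (ModuleCat.of R M) t) := by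
    by_contra! hall
    obtain ⟨d, hd⟩ : ∃ d : ℕ, ringKrullDim R = d :=
      ⟨_, (WithBot.coe_unbot _ ringKrullDim_ne_bot).symm.trans
        (congrArg _ (ENat.natCast_toNat (fun hc => ringKrullDim_ne_top (R := R)
          ((WithBot.coe_unbot _ ringKrullDim_ne_bot).symm.trans (congrArg _ hc)))).symm)⟩
    obtain ⟨rs, hlen, hmem, hreg⟩ := ModuleCat.exists_isRegular_of_exists_subsingleton_ext
      (maximalIdeal R) (d + 1) (ModuleCat.of R M) (maximalIdeal_smul_top_lt M) (resMod R)
      support_resMod (fun i _ => hall i)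
    have hreg' : RingTheory.Sequence.IsRegular M rs := hreg
    have hdim := Module.supportDim_add_length_eq_supportDim_of_isRegular rs hreg'
    have hle := Module.supportDim_le_ringKrullDim R M
    have : Nontrivial (M ⧸ Ideal.ofList rs • (⊤ : Submodule R M)) :=
      Submodule.Quotient.nontrivial_iff.mpr hreg'.2.symm
    have hne := Module.supportDim_ne_bot_of_nontrivial R
      (M ⧸ Ideal.ofList rs • (⊤ : Submodule R M))
    rw [← hdim, hd, hlen] at hle
    generalize Module.supportDim R (M ⧸ Ideal.ofList rs • (⊤ : Submodule R M)) = a at hle hne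
    have h0 : (0 : WithBot ℕ∞) ≤ a := by
      cases a with
      | bot => exact absurd rfl hne
      | coe a => exact_mod_cast zero_le (a := a)
    -- the regular sequence has length `d + 1`, so `d + 1 ≤ dim M ≤ dim R = d`
    have h1 : (((d + 1 : ℕ) : ℕ∞) : WithBot ℕ∞) ≤ ((d : ℕ∞) : WithBot ℕ∞) :=
      (le_add_of_nonneg_left h0).trans hle
    rw [WithBot.coe_le_coe, Nat.cast_le] at h1
    omega
  exact ⟨Nat.find hex, fun i hi => not_not.mp (Nat.find_min hex hi), Nat.find_spec hex⟩

end Depth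

/-! ### The Auslander–Buchsbaum formula -/

section AuslanderBuchsbaum

variable {R : Type u} [CommRing R]

/-- The map induced on `Ext(X, -)` by `g : F ⟶ G` with `F` finite free decomposes as the sum of the
maps induced by the rank one pieces `v ↦ b_j*(v) • g (b_j)`. -/
lemma ext_comp_ofHom_eq_sum {X F G : ModuleCat.{u} R} {ι : Type*} [Fintype ι]
    (b : Module.Basis ι R F) (g : F →ₗ[R] G) {i : ℕ} (x : Abelian.Ext X F i) :
    x.comp (Abelian.Ext.mk₀ (ModuleCat.ofHom g)) (add_zero i) =
      ∑ j, x.comp (Abelian.Ext.mk₀ (ModuleCat.ofHom ((b.coord j).smulRight (g (b j)))))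
        (add_zero i) := by
  classical
  let Φ : (F →ₗ[R] G) →+ Abelian.Ext X G i :=
    { toFun := fun g => x.comp (Abelian.Ext.mk₀ (ModuleCat.ofHom g)) (add_zero i)
      map_zero' := by simp
      map_add' := fun g h => by simp [ModuleCat.ofHom_add, Abelian.Ext.mk₀_add] }
  have hg : g = ∑ j, (b.coord j).smulRight (g (b j)) := by
    refine b.ext fun k => ?_
    simp [LinearMap.sum_apply, Finsupp.single_apply]
  change Φ g = ∑ j, Φ _
  rw [← map_sum, ← hg]

/-- A free module of positive finite rank has the same vanishing of `Ext(X, -)` as the ring. -/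
lemma subsingleton_ext_free_iff {X : ModuleCat.{u} R} (F : ModuleCat.{u} R) [Module.Free R F]
    [Module.Finite R F] [Nontrivial F] (i : ℕ) :
    Subsingleton (Abelian.Ext X F i) ↔ Subsingleton (Abelian.Ext X (ModuleCat.of R R) i) := by
  let b := Module.Free.chooseBasis R F
  have : Nonempty (Module.Free.ChooseBasisIndex R F) := b.index_nonempty
  obtain ⟨j⟩ := this
  constructor
  · intro h
    refine subsingleton_of_forall_eq 0 fun x => ?_
    have hid : ModuleCat.ofHom ((LinearMap.id : R →ₗ[R] R).smulRight (b j)) ≫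
        ModuleCat.ofHom (b.coord j) = 𝟙 (ModuleCat.of R R) := by
      ext; simp
    rw [← x.comp_mk₀_id, ← hid, ← Abelian.Ext.mk₀_comp_mk₀,
      ← Abelian.Ext.comp_assoc_of_third_deg_zero,
      Subsingleton.elim (x.comp (Abelian.Ext.mk₀ _) (add_zero i)) 0, Abelian.Ext.zero_comp]
  · intro h
    refine subsingleton_of_forall_eq 0 fun x => ?_
    rw [← x.comp_mk₀_id]
    refine (ext_comp_ofHom_eq_sum b LinearMap.id x).trans (Finset.sum_eq_zero fun j _ => ?_)
    have hfac : ModuleCat.ofHom ((b.coord j).smulRight (LinearMap.id (R := R) (b j))) =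
        ModuleCat.ofHom (b.coord j) ≫
          ModuleCat.ofHom ((LinearMap.id : R →ₗ[R] R).smulRight (b j)) := by
      ext; simp
    rw [hfac, ← Abelian.Ext.mk₀_comp_mk₀, ← Abelian.Ext.comp_assoc_of_third_deg_zero,
      Subsingleton.elim (x.comp (Abelian.Ext.mk₀ _) (add_zero i)) 0, Abelian.Ext.zero_comp]

variable [IsLocalRing R]

/-- Scalars in `𝔪` act as zero on `Ext_R(k, -)`. -/
lemma ext_resMod_comp_smul {F G : ModuleCat.{u} R} {i : ℕ} (x : Abelian.Ext (resMod R) F i)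
    {r : R} (hr : r ∈ maximalIdeal R) (f : F ⟶ G) :
    x.comp (Abelian.Ext.mk₀ (r • f)) (add_zero i) = 0 := by
  have h1 : r • 𝟙 (resMod R) = 0 := by
    ext
    change r • (Ideal.Quotient.mk (maximalIdeal R) 1) = 0
    rw [← Ideal.Quotient.mk_eq_mk, ← Submodule.Quotient.mk_smul, Submodule.Quotient.mk_eq_zero]
    simpa using hr
  have h2 : r • x = 0 := by
    have : r • x = (Abelian.Ext.mk₀ (r • 𝟙 (resMod R))).comp x (zero_add i) := by
      simp [Abelian.Ext.mk₀_smul]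
    rw [this, h1, Abelian.Ext.mk₀_zero, Abelian.Ext.zero_comp]
  rw [Abelian.Ext.mk₀_smul, Abelian.Ext.comp_smul, ← Abelian.Ext.smul_comp, h2,
    Abelian.Ext.zero_comp]

/-- A map out of a finite free module whose image lies in `𝔪 G` is an `𝔪`-linear combination of
maps, and `𝔪` annihilates `Ext_R(k, -)`; hence it induces zero there. -/
lemma ext_resMod_comp_eq_zero {F G : ModuleCat.{u} R} [Module.Free R F] [Module.Finite R F]
    (g : F →ₗ[R] G) (hg : ∀ v, g v ∈ maximalIdeal R • (⊤ : Submodule R G)) {i : ℕ}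
    (x : Abelian.Ext (resMod R) F i) :
    x.comp (Abelian.Ext.mk₀ (ModuleCat.ofHom g)) (add_zero i) = 0 := by
  rw [ext_comp_ofHom_eq_sum (Module.Free.chooseBasis R F) g x]
  refine Finset.sum_eq_zero fun j _ => ?_
  generalize (Module.Free.chooseBasis R F).coord j = c
  refine Submodule.smul_induction_on (p := fun w =>
    x.comp (Abelian.Ext.mk₀ (ModuleCat.ofHom (c.smulRight w))) (add_zero i) = 0)
    (hg (Module.Free.chooseBasis R F j)) ?_ ?_
  · intro r hr w _
    have : ModuleCat.ofHom (c.smulRight (r • w)) = r • ModuleCat.ofHom (c.smulRight w) := by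
      ext v
      simp [smul_comm r]
    rw [this]
    exact ext_resMod_comp_smul x hr _
  · intro v w hv hw
    have : ModuleCat.ofHom (c.smulRight (v + w)) =
        ModuleCat.ofHom (c.smulRight v) + ModuleCat.ofHom (c.smulRight w) := by
      ext v
      simp
    rw [this, Abelian.Ext.mk₀_add, Abelian.Ext.comp_add, hv, hw, add_zero]

/-- Minimal free covers: lift a basis of `k ⊗ M`. -/
lemma exists_minimal_cover (M : Type u) [AddCommGroup M] [Module R M] [Module.Finite R M] :
    ∃ (F : ModuleCat.{u} R) (_ : Module.Free R F) (_ : Module.Finite R F) (π : F →ₗ[R] M),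
      Function.Surjective π ∧ LinearMap.ker π ≤ maximalIdeal R • (⊤ : Submodule R F) := by
  classical
  let b := Module.Free.chooseBasis (ResidueField R) (TensorProduct R (ResidueField R) M)
  have hsurj : Function.Surjective (TensorProduct.mk R (ResidueField R) M 1) :=
    TensorProduct.mk_surjective R M (ResidueField R) IsLocalRing.residue_surjective
  choose f hf using fun i => hsurj (b i)
  have hspan := IsLocalRing.span_eq_top_of_tmul_eq_basis f b hf
  refine ⟨ModuleCat.of R (_ →₀ R), inferInstanceAs (Module.Free R (_ →₀ R)),
    inferInstanceAs (Module.Finite R (_ →₀ R)), Finsupp.linearCombination R f, ?_, ?_⟩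
  · rw [← LinearMap.range_eq_top, Finsupp.range_linearCombination, hspan]
  · intro c hc
    have hc0 : Finsupp.linearCombination R f c = 0 := hc
    have hmem : ∀ i, c i ∈ maximalIdeal R := by
      have h1 : Finsupp.linearCombination (ResidueField R) b
          (c.mapRange (residue R) (map_zero _)) = 0 := by
        have := congrArg (TensorProduct.mk R (ResidueField R) M 1) hc0
        rw [map_zero, Finsupp.linearCombination_apply, map_finsuppSum] at this
        rw [Finsupp.linearCombination_apply, Finsupp.sum_mapRange_index (by simp), ← this]
        refine Finsupp.sum_congr fun i _ => ?_
        rw [map_smul, hf]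
        rfl
      intro i
      have h2 := (linearIndependent_iff.mp b.linearIndependent) _ h1
      have h3 := DFunLike.congr_fun h2 i
      rw [Finsupp.mapRange_apply] at h3
      exact (residue_eq_zero_iff _).mp h3
    rw [← Finsupp.sum_single c]
    refine Submodule.sum_mem _ fun i _ => ?_
    have : Finsupp.single i (c i) = c i • Finsupp.single i (1 : R) := by simp
    rw [this]
    exact Submodule.smul_mem_smul (hmem i) trivial

variable [IsNoetherianRing R]

/-- The Auslander–Buchsbaum formula, with depth measured by `Ext_R(k, -)`. -/
theorem auslanderBuchsbaum {d : ℕ} (hR : ExtDepthEq (ModuleCat.of R R) d) (n : ℕ)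
    (M : ModuleCat.{u} R) [Module.Finite R M]
    (h₁ : HasProjectiveDimensionLT M (n + 1)) (h₂ : ¬ HasProjectiveDimensionLT M n) :
    ∃ t, n + t = d ∧ ExtDepthEq M t := by
  have hfree (F : ModuleCat.{u} R) [Module.Free R F] [Module.Finite R F] [Nontrivial F] :
      ExtDepthEq F d :=
    ⟨fun i hi => (subsingleton_ext_free_iff F i).mpr (hR.1 i hi),
      fun h => hR.2 ((subsingleton_ext_free_iff F d).mp h)⟩
  have hnt (M : ModuleCat.{u} R) (n : ℕ) (h : ¬ HasProjectiveDimensionLT M n) :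
      Nontrivial M := by
    by_contra hc
    rw [not_nontrivial_iff_subsingleton, ← ModuleCat.isZero_iff_subsingleton] at hc
    have := hc.hasProjectiveDimensionLT_zero
    exact h (hasProjectiveDimensionLT_of_ge M 0 n (by omega))
  have hprojfree (M : ModuleCat.{u} R) [Module.Finite R M] (h : HasProjectiveDimensionLT M 1) :
      Module.Free R M := by
    rw [← projective_iff_hasProjectiveDimensionLT_one, ← IsProjective.iff_projective] at h
    exact Module.free_of_flat_of_isLocalRing
  have : Nontrivial M := hnt M n h₂
  induction n generalizing M with
  | zero =>
    have := hprojfree M h₁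
    exact ⟨d, zero_add d, hfree M⟩
  | succ n ih =>
    obtain ⟨F, _, _, π, hπ, hmin⟩ := exists_minimal_cover (R := R) M
    have : Nontrivial F := hπ.nontrivial
    have hS : π.shortComplexKer.ShortExact := LinearMap.shortExact_shortComplexKer hπ
    let K : ModuleCat.{u} R := ModuleCat.of R (LinearMap.ker π)
    have hFproj : Projective F :=
      (IsProjective.iff_projective _).mp (Module.Projective.of_free (R := R) (P := F))
    have hK₁ : HasProjectiveDimensionLT K (n + 1) :=
      hS.hasProjectiveDimensionLT_X₁ (n + 1)
        (hasProjectiveDimensionLT_of_ge F 1 (n + 1) (by omega)) h₁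
    have hK₂ : ¬ HasProjectiveDimensionLT K n := fun hK => h₂
      (hS.hasProjectiveDimensionLT_X₃ n hK (hasProjectiveDimensionLT_of_ge F 1 (n + 1) (by omega)))
    have : Nontrivial K := hnt K n hK₂
    obtain ⟨e, hne, hKe⟩ := ih K hK₁ hK₂ inferInstance
    have hF : ExtDepthEq F d := hfree F
    -- the map `Ext^e(k, K) ⟶ Ext^e(k, F)` vanishes
    have hzero (x : Abelian.Ext (resMod R) K e) :
        x.comp (Abelian.Ext.mk₀ π.shortComplexKer.f) (add_zero e) = 0 := by
      rcases Nat.eq_zero_or_pos n with rfl | hn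
      · have := hprojfree K hK₁
        exact ext_resMod_comp_eq_zero (F := K) (G := F) (LinearMap.ker π).subtype
          (fun v => hmin v.2) x
      · have := hF.1 e (by omega)
        exact Subsingleton.elim (α := Abelian.Ext (resMod R) F e) _ _
    -- otherwise `Hom(k, K) ≠ 0` would inject into `Hom(k, F)` by a zero map
    have hepos : e ≠ 0 := by
      rintro rfl
      refine hKe.2 (subsingleton_of_forall_eq 0 fun x => ?_)
      have := hS.mono_f
      refine Abelian.Ext.postcomp_mk₀_injective_of_mono (resMod R) π.shortComplexKer.f ?_
      exact (hzero x).trans (map_zero _).symm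
    obtain ⟨t, rfl⟩ := Nat.exists_eq_succ_of_ne_zero hepos
    refine ⟨t, by omega, fun i hi => subsingleton_of_forall_eq 0 fun x => ?_, fun hM => ?_⟩
    · have h3 : Subsingleton (Abelian.Ext (resMod R) K (i + 1)) := hKe.1 (i + 1) (by omega)
      have h4 : Subsingleton (Abelian.Ext (resMod R) F i) := hF.1 i (by omega)
      obtain ⟨y, rfl⟩ := Abelian.Ext.covariant_sequence_exact₃ (resMod R) hS x rfl
        (Subsingleton.elim (α := Abelian.Ext (resMod R) K (i + 1)) _ _)
      rw [Subsingleton.elim (α := Abelian.Ext (resMod R) F i) y 0]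
      exact Abelian.Ext.zero_comp ..
    · refine hKe.2 (subsingleton_of_forall_eq 0 fun x => ?_)
      obtain ⟨y, rfl⟩ := Abelian.Ext.covariant_sequence_exact₁ (resMod R) hS x (hzero x) rfl
      rw [Subsingleton.elim (α := Abelian.Ext (resMod R) M t) y 0]
      exact Abelian.Ext.zero_comp ..

end AuslanderBuchsbaum

/-- If `M` is a nonzero finitely generated module of finite projective dimension, then
`AB-dim_R M` is finite and `AB-dim_R M = pd_R M = depth R - depth_R M`. -/
theorem statement2 (R : Type u) [CommRing R] [IsLocalRing R] [IsNoetherianRing R]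
    (M : Type u) [AddCommGroup M] [Module R M] [Module.Finite R M] [Nontrivial M]
    (h : projdim R M < ⊤) :
    abdim R M < ⊤ ∧ abdim R M = ((projdim R M : ℕ∞) : WithBot ℕ∞) ∧
      projdim R M = rdepth R R - rdepth R M := by
  obtain ⟨n, hn, hres, h₁, h₂⟩ := exists_projdim_eq h
  have hab : abdim R M = ((n : ℕ∞) : WithBot ℕ∞) := by
    rw [abdim, extPsup_eq h₁ h₂, max_eq_right]
    exact WithBot.coe_le_coe.mpr (gdim_le_of_projDimLE hres)
  obtain ⟨d, hd⟩ := exists_extDepthEq (R := R) R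
  obtain ⟨t, hnt, ht⟩ := auslanderBuchsbaum hd n (ModuleCat.of R M) h₁ h₂
  refine ⟨?_, by rw [hab, hn], ?_⟩
  · rw [hab]
    exact WithBot.coe_lt_coe.mpr (ENat.natCast_lt_top n)
  · rw [hn, rdepth_eq_of_extDepthEq hd, rdepth_eq_of_extDepthEq ht, ← hnt]
    norm_cast
    omega
end

section
/- Let (R, 𝔪, k) be a commutative noetherian local ring, let 0 → M₁ → M₂ → M₃ → 0 be a short exact sequence of finitely generated R-modules, and let (i, j, l) be a permutation of (1, 2, 3). If pd_R M_i < ∞, then P_R(M_j) < ∞ if and only if P_R(M_l) < ∞; moreover, if P_R(M_j) < ∞ then P_R(M_l) ≤ max{ pd_R M_i + 1, P_R(M_j) + 1 }. -/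
/-!
Fix `N`, and let `p = pd M_i`, so that `Ext^q(M_i, N) = 0` for `q > p`. By the long exact sequence
of `Ext(-, N)`, if `Ext(M_i, N)` and `Ext(M_j, N)` both vanish from degree `m` on, then
`Ext^(m+1)(M_l, N) = 0` (`vanishing_two_of_three`). Used with `j` and `l` exchanged, this shows that
`M_l^⊥ ⊆ M_j^⊥`; hence for `N ∈ M_l^⊥` the group `Ext^q(M_j, N)` vanishes for `q > P(M_j)`, and
therefore `Ext^n(M_l, N)` vanishes for `n > max (p + 1) (P(M_j) + 1)` (`extPsup_le_max`). The
equivalence of finiteness follows from this bound and the one with `j` and `l` exchanged.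

The long exact sequence is available in Mathlib for `Abelian.Ext`, whereas the statement uses the
left-derived functor `Ext`; `extVanishes_succ_iff` compares the two in positive degrees. These
suffice, as every degree involved exceeds `p`.
-/

open CategoryTheory IsLocalRing

/-- In positive degrees the left-derived `Ext` of the statement and the `Abelian.Ext` defined
through the derived category vanish together: on a projective resolution of `M`, both say that
every `(n + 1)`-cocycle with values in `N` is a coboundary. -/
lemma extVanishes_succ_iff (R : Type u) [CommRing R] (M N : ModuleCat.{u} R) (n : ℕ) :
    ExtVanishes R M N (n + 1) ↔ Subsingleton (Abelian.Ext.{u} M N (n + 1)) := by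
  let P := projectiveResolution M
  have h1 : ExtVanishes R M N (n + 1) ↔
      ∀ f : P.complex.X (n + 1) ⟶ N, P.complex.d (n + 2) (n + 1) ≫ f = 0 →
        ∃ g : P.complex.X n ⟶ N, P.complex.d (n + 1) n ≫ g = f := by
    have e := (P.isoExt (R := R) (n + 1) N).isZero_iff
    rw [← HomologicalComplex.exactAt_iff_isZero_homology,
      HomologicalComplex.exactAt_iff' _ n (n + 1) (n + 2) (by simp) (by simp),
      ShortComplex.moduleCat_exact_iff, ModuleCat.isZero_iff_subsingleton] at e
    exact e
  rw [h1]
  constructor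
  · intro h
    refine ⟨fun a b => ?_⟩
    have key : ∀ a : Abelian.Ext.{u} M N (n + 1), a = 0 := by
      intro a
      obtain ⟨f, hf, rfl⟩ := P.extMk_surjective a (n + 2) rfl
      exact (P.extMk_eq_zero_iff f _ rfl hf n rfl).2 (h f hf)
    rw [key a, key b]
  · intro h f hf
    exact (P.extMk_eq_zero_iff f _ rfl hf n rfl).1 (Subsingleton.elim _ _)

lemma shortExact_of_linearMap {R : Type u} [CommRing R] {A B C : ModuleCat.{u} R}
    (f : A →ₗ[R] B) (g : B →ₗ[R] C) (hf : Function.Injective f) (hg : Function.Surjective g)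
    (hfg : LinearMap.range f = LinearMap.ker g) :
    ∃ w : ModuleCat.ofHom f ≫ ModuleCat.ofHom g = 0,
      (ShortComplex.mk (ModuleCat.ofHom f) (ModuleCat.ofHom g) w).ShortExact := by
  have w : ModuleCat.ofHom f ≫ ModuleCat.ofHom g = 0 := by
    ext x
    have : f x ∈ LinearMap.ker g := hfg ▸ LinearMap.mem_range_self f x
    simpa using this
  refine ⟨w, ?_⟩
  have := (ModuleCat.mono_iff_injective (ModuleCat.ofHom f)).2 hf
  have := (ModuleCat.epi_iff_surjective (ModuleCat.ofHom g)).2 hg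
  exact { exact := (ShortComplex.moduleCat_exact_iff_range_eq_ker _).2 hfg }

lemma ProjDimLE.hasProjectiveDimensionLE {R : Type u} [CommRing R] (n : ℕ) :
    ∀ M : ModuleCat.{u} R, ProjDimLE R n M → HasProjectiveDimensionLE M n := by
  induction n with
  | zero =>
    intro M hM
    have : Projective M := (IsProjective.iff_projective M).1 hM
    infer_instance
  | succ n ih =>
    rintro M ⟨P, -, hP, f, hf, hK⟩
    have : Projective P := (IsProjective.iff_projective P).1 hP
    obtain ⟨w, hS⟩ := shortExact_of_linearMap (A := ModuleCat.of R (LinearMap.ker f))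
      (LinearMap.ker f).subtype f Subtype.val_injective hf (by simp)
    exact hS.hasProjectiveDimensionLT_X₃ (n + 1) (ih _ hK) inferInstance

/-- The three exactness properties of the long exact sequence of `Ext(-, N)`, in terms of
vanishing. -/
lemma ext_vanishing_of_shortExact {R : Type u} [CommRing R] {S : ShortComplex (ModuleCat.{u} R)}
    (hS : S.ShortExact) (N : ModuleCat.{u} R) (n : ℕ) :
    (Subsingleton (Abelian.Ext.{u} S.X₂ N n) → Subsingleton (Abelian.Ext.{u} S.X₃ N (n + 1)) →
      Subsingleton (Abelian.Ext.{u} S.X₁ N n)) ∧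
    (Subsingleton (Abelian.Ext.{u} S.X₁ N n) → Subsingleton (Abelian.Ext.{u} S.X₃ N n) →
      Subsingleton (Abelian.Ext.{u} S.X₂ N n)) ∧
    (Subsingleton (Abelian.Ext.{u} S.X₁ N n) → Subsingleton (Abelian.Ext.{u} S.X₂ N (n + 1)) →
      Subsingleton (Abelian.Ext.{u} S.X₃ N (n + 1))) := by
  refine ⟨fun h h' => subsingleton_of_forall_eq 0 fun x => ?_,
    fun h h' => subsingleton_of_forall_eq 0 fun x => ?_,
    fun h h' => subsingleton_of_forall_eq 0 fun x => ?_⟩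
  · obtain ⟨y, rfl⟩ := Abelian.Ext.contravariant_sequence_exact₁ hS N x (add_comm 1 n)
      (Subsingleton.elim _ _)
    rw [Subsingleton.elim y 0, Abelian.Ext.comp_zero]
  · obtain ⟨y, rfl⟩ := Abelian.Ext.contravariant_sequence_exact₂ hS N x (Subsingleton.elim _ _)
    rw [Subsingleton.elim y 0, Abelian.Ext.comp_zero]
  · obtain ⟨y, rfl⟩ := Abelian.Ext.contravariant_sequence_exact₃ hS N x
      (Subsingleton.elim _ _) (add_comm 1 n)
    rw [Subsingleton.elim y 0, Abelian.Ext.comp_zero]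

/-- Vanishing of `Ext(-, N)` from degree `m` on, for two terms of a short exact sequence, forces
vanishing in degree `m + 1` for the remaining term. -/
lemma vanishing_two_of_three (V : Fin 3 → ℕ → Prop)
    (hV : ∀ n, (V 1 n → V 2 (n + 1) → V 0 n) ∧ (V 0 n → V 2 n → V 1 n) ∧
      (V 0 n → V 1 (n + 1) → V 2 (n + 1)))
    (i j l : Fin 3) (hij : i ≠ j) (hjl : j ≠ l) (hil : i ≠ l) (m : ℕ)
    (hi : ∀ q ≥ m, V i q) (hj : ∀ q ≥ m, V j q) : V l (m + 1) := by
  have i0 := hi m le_rfl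
  have i1 := hi (m + 1) (by omega)
  have i2 := hi (m + 2) (by omega)
  have j0 := hj m le_rfl
  have j1 := hj (m + 1) (by omega)
  have j2 := hj (m + 2) (by omega)
  obtain ⟨-, -, c⟩ := hV m
  obtain ⟨a, b, -⟩ := hV (m + 1)
  fin_cases i <;> fin_cases j <;> fin_cases l <;> first
    | exact absurd rfl hij
    | exact absurd rfl hjl
    | exact absurd rfl hil
    | exact a i1 j2
    | exact a j1 i2
    | exact b i1 j1
    | exact b j1 i1
    | exact c i0 j1
    | exact c j0 i1

/-- The inequality of the theorem; when `P_R(M_j) = ∞` it holds trivially. -/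
lemma extPsup_le_max (R : Type u) [CommRing R]
    (Ms : Fin 3 → ModuleCat.{u} R)
    (f : Ms 0 →ₗ[R] Ms 1) (g : Ms 1 →ₗ[R] Ms 2)
    (hf : Function.Injective f) (hg : Function.Surjective g)
    (hfg : LinearMap.range f = LinearMap.ker g)
    (i j l : Fin 3) (hij : i ≠ j) (hjl : j ≠ l) (hil : i ≠ l)
    (hpd : projdim R (Ms i) < ⊤) :
    extPsup R (Ms l) ≤ max (((projdim R (Ms i) : ℕ∞) : WithBot ℕ∞) + 1)
      (extPsup R (Ms j) + 1) := by
  obtain ⟨p, hp, hpeq⟩ : projdim R (Ms i) ∈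
      {x : ℕ∞ | ∃ n : ℕ, ProjDimLE R n (ModuleCat.of R (Ms i)) ∧ x = n} := by
    refine csInf_mem (Set.nonempty_iff_ne_empty.2 fun h => ?_)
    rw [projdim, h, sInf_empty] at hpd
    exact lt_irrefl _ hpd
  have hpi := ProjDimLE.hasProjectiveDimensionLE p (Ms i) hp
  obtain ⟨w, hS⟩ := shortExact_of_linearMap f g hf hg hfg
  refine sSup_le ?_
  rintro _ ⟨N, _, _, hN, ⟨d, hd⟩, rfl⟩
  refine sSup_le ?_
  rintro _ ⟨n, hn, rfl⟩
  by_contra hlt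
  rw [not_le, max_lt_iff, hpeq] at hlt
  obtain ⟨hlt1, hlt2⟩ := hlt
  have hpn : p + 1 < n := by exact_mod_cast hlt1
  -- The vanishing criterion is applied from degree `m + 1 > 0` on, where both `Ext` agree.
  obtain ⟨m, rfl⟩ : ∃ m, n = m + 2 := ⟨n - 2, by omega⟩
  let V : Fin 3 → ℕ → Prop := fun t q =>
    Subsingleton (Abelian.Ext.{u} (Ms t) (ModuleCat.of R N) q)
  have hV := ext_vanishing_of_shortExact hS (ModuleCat.of R N)
  have hconv : ∀ t q, ExtVanishes R (Ms t) N (q + 1) ↔ V t (q + 1) := fun t q =>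
    extVanishes_succ_iff R (Ms t) (ModuleCat.of R N) q
  have hi : ∀ q ≥ p + 1, V i q := fun q hq =>
    HasProjectiveDimensionLT.subsingleton (Ms i) (p + 1) q hq _
  have hperp : MemPerp R (Ms j) N := by
    refine ⟨max d (p + 1) + 2, fun q hq => ?_⟩
    obtain ⟨q, rfl⟩ : ∃ r, q = r + 1 := ⟨q - 1, by omega⟩
    refine (hconv j q).2 (vanishing_two_of_three V hV i l j hil hjl.symm hij q
      (fun r hr => hi r (by omega)) fun r hr => ?_)
    obtain ⟨r, rfl⟩ : ∃ s, r = s + 1 := ⟨r - 1, by omega⟩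
    exact (hconv l r).1 (hd _ (by omega))
  refine hn ((hconv l (m + 1)).2 (vanishing_two_of_three V hV i j l hij hjl hil (m + 1)
    (fun q hq => hi q (by omega)) fun q hq => ?_))
  obtain ⟨q, rfl⟩ : ∃ r, q = r + 1 := ⟨q - 1, by omega⟩
  rw [← hconv]
  by_contra hq'
  have h1 : (((q + 1 : ℕ) : ℕ∞) : WithBot ℕ∞) ≤ extPsup R (Ms j) :=
    (le_sSup ⟨q + 1, hq', rfl⟩ : _ ≤ extP R (Ms j) N).trans
      (le_sSup ⟨N, _, _, hN, hperp, rfl⟩)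
  have h2 : (((q + 1 : ℕ) : ℕ∞) : WithBot ℕ∞) + 1 < (((m + 2 : ℕ) : ℕ∞) : WithBot ℕ∞) :=
    (by gcongr : _ ≤ extPsup R (Ms j) + 1).trans_lt hlt2
  have h3 : q + 1 + 1 < m + 2 := by exact_mod_cast h2
  omega

/-- Lemma 2.4: given a short exact sequence `0 → M₁ → M₂ → M₃ → 0` and a permutation
`(i,j,l)` of `(1,2,3)` with `pd_R M_i < ∞`, we have `P_R(M_j) < ∞ ↔ P_R(M_l) < ∞`, and if
`P_R(M_j) < ∞` then `P_R(M_l) ≤ max (pd_R M_i + 1) (P_R(M_j) + 1)`. -/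
theorem statement3 (R : Type u) [CommRing R] [IsLocalRing R] [IsNoetherianRing R]
    (Ms : Fin 3 → ModuleCat.{u} R) (hfin : ∀ t, Module.Finite R (Ms t))
    (f : Ms 0 →ₗ[R] Ms 1) (g : Ms 1 →ₗ[R] Ms 2)
    (hf : Function.Injective f) (hg : Function.Surjective g)
    (hfg : LinearMap.range f = LinearMap.ker g)
    (i j l : Fin 3) (hij : i ≠ j) (hjl : j ≠ l) (hil : i ≠ l)
    (hpd : projdim R (Ms i) < ⊤) :
    (extPsup R (Ms j) < ⊤ ↔ extPsup R (Ms l) < ⊤) ∧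
    (extPsup R (Ms j) < ⊤ →
      extPsup R (Ms l) ≤ max (((projdim R (Ms i) : ℕ∞) : WithBot ℕ∞) + 1)
        (extPsup R (Ms j) + 1)) := by
  have key : ∀ a b : Fin 3, i ≠ a → a ≠ b → i ≠ b → extPsup R (Ms a) < ⊤ →
      extPsup R (Ms b) < ⊤ := by
    intro a b hia hab hib ha
    refine (extPsup_le_max R Ms f g hf hg hfg i a b hia hab hib hpd).trans_lt (max_lt ?_ ?_)
    · obtain ⟨p, hp⟩ := ENat.ne_top_iff_exists.1 hpd.ne
      rw [← hp]
      exact WithBot.coe_lt_coe.2 (ENat.natCast_lt_top (p + 1))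
    · generalize extPsup R (Ms a) = x at ha
      cases x with
      | bot => simp
      | coe x =>
        have hx : x < ⊤ := WithBot.coe_lt_coe.1 ha
        obtain ⟨p, rfl⟩ := ENat.ne_top_iff_exists.1 hx.ne
        exact WithBot.coe_lt_coe.2 (ENat.natCast_lt_top (p + 1))
  exact ⟨⟨key j l hij hjl hil, key l j hil hjl.symm hij⟩,
    fun _ => extPsup_le_max R Ms f g hf hg hfg i j l hij hjl hil hpd⟩
end
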